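/- Let κ, c_s, c_p > 0 and n ∈ ℕ. Then there exist ε > 0 and M > 0 such that for all 0 < r < ε, |ξ̃_{1,n}(r) − (−1/(2c_p²) − 1/(2c_s²))| ≤ M r²; in particular ξ̃_{1,n}(r) → −1/(2c_p²) − 1/(2c_s²) as r → 0⁺. -/

import Mathlib

open Real Filter MeasureTheory

noncomputable def acoef (γ : ℝ) : ℕ → ℕ → ℝ
  | n, m =>
    if m = 0 then 1
    else if n < m then 0
    else if m = n then -(γ / (n : ℝ)) * acoef γ (n - 1) (n - 1)
    else (1 / (2 * γ * (m : ℝ))) *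
      (4 * (((m + 1) / 2 : ℕ) : ℝ) ^ 2 * acoef γ n (m + 1)
        - γ ^ 2 * ∑ k ∈ (Finset.Icc (m - 1) (n - 1)).attach,
            ((n - (k : ℕ) + 1 : ℕ) : ℝ) * acoef γ (k : ℕ) (m - 1))
  termination_by n m => (n, n - m)
  decreasing_by
  · apply Prod.Lex.left; omega
  · apply Prod.Lex.right; omega
  · apply Prod.Lex.left
    have hk := k.2
    simp only [Finset.mem_Icc] at hk
    omega

/-- χ_{k,n} -/
noncomputable def chiC (n : ℕ) (k : ℤ) : ℝ :=
  if k = -2 then (n : ℝ) * ((n : ℝ) - 1)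
  else if k = -1 then -4 * (n : ℝ) ^ 2
  else if k = 0 then 2 * (3 * (n : ℝ) ^ 2 + 3 * (n : ℝ) + 1)
  else if k = 1 then -4 * ((n : ℝ) + 1) ^ 2
  else if k = 2 then ((n : ℝ) + 1) * ((n : ℝ) + 2)
  else 0

/-- the sum ∑_{k=-2}^{2} χ_{k,n} f(n+k), terms with n+k<0 omitted -/
noncomputable def sumChi (n : ℕ) (f : ℕ → ℝ) : ℝ :=
  ∑ k ∈ Finset.Icc (-2 : ℤ) 2,
    if 0 ≤ (n : ℤ) + k then chiC n k * f ((n : ℤ) + k).toNat else 0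

noncomputable def besselI0 (z : ℝ) : ℝ := ∑' k : ℕ, (z / 2) ^ (2 * k) / (k.factorial : ℝ) ^ 2

noncomputable def besselI1 (z : ℝ) : ℝ :=
  ∑' k : ℕ, (z / 2) ^ (2 * k + 1) / ((k.factorial : ℝ) * ((k + 1).factorial : ℝ))

noncomputable def psiH (k : ℕ) : ℝ := ∑ j ∈ Finset.range k, (1 : ℝ) / ((j : ℝ) + 1)

noncomputable def besselS0 (z : ℝ) : ℝ :=
  ∑' k : ℕ, psiH k * (z / 2) ^ (2 * k) / (k.factorial : ℝ) ^ 2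

noncomputable def besselS1 (z : ℝ) : ℝ :=
  -(1 / 2) * ∑' k : ℕ, (psiH (k + 1) + psiH k) * (z / 2) ^ (2 * k + 1) /
    ((k.factorial : ℝ) * ((k + 1).factorial : ℝ))

noncomputable def vPol (γ : ℝ) (n : ℕ) (r : ℝ) : ℝ :=
  ∑ m ∈ Finset.range (n / 2 + 1), acoef γ n (2 * m) * r ^ (2 * m)

noncomputable def wPol (γ : ℝ) (n : ℕ) (r : ℝ) : ℝ :=
  ∑ m ∈ Finset.range ((n - 1) / 2 + 1), acoef γ n (2 * m + 1) * r ^ (2 * m + 1)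

noncomputable def vTil (γ : ℝ) (n : ℕ) (r : ℝ) : ℝ :=
  2 * ∑ m ∈ Finset.Icc 1 (n / 2), (m : ℝ) * acoef γ n (2 * m) * r ^ (2 * m)
    - γ * ∑ m ∈ Finset.range ((n - 1) / 2 + 1), acoef γ n (2 * m + 1) * r ^ (2 * m + 2)

noncomputable def wTil (γ : ℝ) (n : ℕ) (r : ℝ) : ℝ :=
  2 * ∑ m ∈ Finset.Icc 1 ((n - 1) / 2), (m : ℝ) * acoef γ n (2 * m + 1) * r ^ (2 * m + 1)
    - γ * ∑ m ∈ Finset.range (n / 2 + 1), acoef γ n (2 * m) * r ^ (2 * m + 1)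

noncomputable def phiF (γ : ℝ) (n : ℕ) (r : ℝ) : ℝ :=
  -besselI0 (γ * r) * vPol γ n r + besselI1 (γ * r) * wPol γ n r

noncomputable def phiHat (γ : ℝ) (n : ℕ) (r : ℝ) : ℝ :=
  (-(Real.eulerMascheroniConstant + Real.log (γ / 2)) * besselI0 (γ * r) + besselS0 (γ * r)) * vPol γ n r
    + (1 / (γ * r) + (Real.eulerMascheroniConstant + Real.log (γ / 2)) * besselI1 (γ * r)
        + besselS1 (γ * r)) * wPol γ n r

noncomputable def phiTil (γ : ℝ) (n : ℕ) (r : ℝ) : ℝ :=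
  -besselI0 (γ * r) * vTil γ n r + besselI1 (γ * r) * wTil γ n r

noncomputable def phiHatTil (γ : ℝ) (n : ℕ) (r : ℝ) : ℝ :=
  (-(Real.eulerMascheroniConstant + Real.log (γ / 2)) * besselI0 (γ * r) + besselS0 (γ * r)) * vTil γ n r
    + (1 / (γ * r) + (Real.eulerMascheroniConstant + Real.log (γ / 2)) * besselI1 (γ * r)
        + besselS1 (γ * r)) * wTil γ n r

noncomputable def etaF (κ cs cp : ℝ) (ℓ n : ℕ) (r : ℝ) : ℝ :=
  (-(ℓ : ℝ)) ^ (ℓ - 1) / (κ ^ 2 * r ^ 2) *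
      sumChi n (fun j => phiF (κ / cs) j r - phiF (κ / cp) j r)
    + (-1 : ℝ) ^ (ℓ - 1) / cp ^ 2 * phiF (κ / cp) n r
    + ((ℓ : ℝ) - 1) / cs ^ 2 * phiF (κ / cs) n r

noncomputable def xiF (κ cs cp : ℝ) (ℓ n : ℕ) (r : ℝ) : ℝ :=
  (-(ℓ : ℝ)) ^ (ℓ - 1) / (κ ^ 2 * r ^ 2) *
      sumChi n (fun j => phiHat (κ / cs) j r - phiHat (κ / cp) j r)
    + (-1 : ℝ) ^ (ℓ - 1) / cp ^ 2 * phiHat (κ / cp) n r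
    + ((ℓ : ℝ) - 1) / cs ^ 2 * phiHat (κ / cs) n r

noncomputable def etaTil (κ cs cp : ℝ) (ℓ n : ℕ) (r : ℝ) : ℝ :=
  (-(ℓ : ℝ)) ^ (ℓ - 1) / (κ ^ 2 * r ^ 2) *
      sumChi n (fun j => phiTil (κ / cs) j r - 2 * phiF (κ / cs) j r
        + 2 * phiF (κ / cp) j r - phiTil (κ / cp) j r)
    + (-1 : ℝ) ^ (ℓ - 1) / cp ^ 2 * phiTil (κ / cp) n r
    + ((ℓ : ℝ) - 1) / cs ^ 2 * phiTil (κ / cs) n r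

noncomputable def xiTil (κ cs cp : ℝ) (ℓ n : ℕ) (r : ℝ) : ℝ :=
  (-(ℓ : ℝ)) ^ (ℓ - 1) / (κ ^ 2 * r ^ 2) *
      sumChi n (fun j => phiHatTil (κ / cs) j r - 2 * phiHat (κ / cs) j r
        + 2 * phiHat (κ / cp) j r - phiHatTil (κ / cp) j r)
    + (-1 : ℝ) ^ (ℓ - 1) / cp ^ 2 * phiHatTil (κ / cp) n r
    + ((ℓ : ℝ) - 1) / cs ^ 2 * phiHatTil (κ / cs) n r

open Asymptotics
open scoped Topology

/-!
The sum `∑ₖ χ_{k,n} f(n+k)` annihilates constants and sends `f(j) = (j+1)(j+2)` to `4`. As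
`r → 0⁺`, each `φ̂̃ⱼ(γ,r) - 2 φ̂ⱼ(γ,r)` has an expansion `αⱼ(γ) + βⱼ(γ) r² + O(r⁴)`. The recursion
at `m = 1` gives `βⱼ(γ) = -γ² (j+1)(j+2) / 8`, and the homogeneity `a_{j,m}(γ) = γᵐ a_{j,m}(1)`
makes `αⱼ(γ_s) - αⱼ(γ_p)` independent of `j`. Hence the sum in `ξ̃_{1,n}(r)` is
`(γ_p² - γ_s²) r² / 2 + O(r⁴)`, and dividing by `κ² r²` leaves `1/(2c_p²) - 1/(2c_s²)`; the
remaining term `φ̂̃ₙ(γ_p,r) / c_p²` contributes `-1/c_p²`.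
-/

/-! ### Even expansions at the origin -/

/-- `f r = a + b r² + O(r⁴)` as `r → 0⁺`. Only the right-hand limit is used, so `f` itself
need not be even. -/
def HasEvenExpansion (f : ℝ → ℝ) (a b : ℝ) : Prop :=
  (fun r => f r - (a + b * r ^ 2)) =O[𝓝[>] 0] fun r => r ^ 4

theorem exists_forall_abs_le_of_isBigO_nhdsGT_zero {f g : ℝ → ℝ} (h : f =O[𝓝[>] 0] g) :
    ∃ ε > 0, ∃ M > 0, ∀ r, 0 < r → r < ε → |f r| ≤ M * |g r| := by
  obtain ⟨M, hM, hfg⟩ := h.exists_pos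
  obtain ⟨ε, hε, hsub⟩ := mem_nhdsGT_iff_exists_Ioo_subset.1 hfg.bound
  exact ⟨ε, hε, M, hM, fun r hr hrε => hsub ⟨hr, hrε⟩⟩

theorem tendsto_of_isBigO_sub_sq {f : ℝ → ℝ} {a : ℝ}
    (h : (fun r => f r - a) =O[𝓝[>] 0] fun r => r ^ 2) : Tendsto f (𝓝[>] 0) (𝓝 a) := by
  have hsq : Tendsto (fun r : ℝ => r ^ 2) (𝓝[>] 0) (𝓝 0) :=
    ((continuous_pow 2).tendsto' 0 0 (by simp)).mono_left nhdsWithin_le_nhds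
  exact tendsto_sub_nhds_zero_iff.1 (h.trans_tendsto hsq)

theorem hasEvenExpansion_quadratic (a b : ℝ) : HasEvenExpansion (fun r => a + b * r ^ 2) a b :=
  (isBigO_zero _ _).congr_left fun _ => (sub_self _).symm

theorem hasEvenExpansion_const (a : ℝ) : HasEvenExpansion (fun _ => a) a 0 := by
  simpa using hasEvenExpansion_quadratic a 0

theorem hasEvenExpansion_sq : HasEvenExpansion (fun r => r ^ 2) 0 1 := by
  simpa using hasEvenExpansion_quadratic 0 1

namespace HasEvenExpansion

variable {f g : ℝ → ℝ} {a b c d : ℝ}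

theorem congr' (hf : HasEvenExpansion f a b) (hfg : f =ᶠ[𝓝[>] 0] g) (ha : a = c) (hb : b = d) :
    HasEvenExpansion g c d := by
  subst ha hb
  exact hf.congr' (hfg.sub .rfl) .rfl

theorem congr (hf : HasEvenExpansion f a b) (hfg : ∀ r, f r = g r) (ha : a = c) (hb : b = d) :
    HasEvenExpansion g c d :=
  hf.congr' (.of_forall hfg) ha hb

theorem isBigO_sub (hf : HasEvenExpansion f a b) :
    (fun r => f r - a) =O[𝓝[>] 0] fun r => r ^ 2 := by
  have hquartic : (fun r => f r - (a + b * r ^ 2)) =O[𝓝[>] 0] fun r => r ^ 2 :=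
    hf.trans ((isLittleO_pow_pow (by norm_num)).isBigO.mono nhdsWithin_le_nhds)
  have hquadratic : (fun r : ℝ => b * r ^ 2) =O[𝓝[>] 0] fun r => r ^ 2 :=
    isBigO_const_mul_self b _ _
  exact (hquartic.add hquadratic).congr_left fun r => by ring

theorem isBigO_one (hf : HasEvenExpansion f a b) : f =O[𝓝[>] 0] fun _ => (1 : ℝ) :=
  (tendsto_of_isBigO_sub_sq hf.isBigO_sub).isBigO_one ℝ

theorem add (hf : HasEvenExpansion f a b) (hg : HasEvenExpansion g c d) :
    HasEvenExpansion (fun r => f r + g r) (a + c) (b + d) :=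
  (IsBigO.add hf hg).congr_left fun r => by ring

theorem mul (hf : HasEvenExpansion f a b) (hg : HasEvenExpansion g c d) :
    HasEvenExpansion (fun r => f r * g r) (a * c) (a * d + b * c) := by
  have hfg : (fun r => (f r - (a + b * r ^ 2)) * g r) =O[𝓝[>] 0] fun r => r ^ 4 := by
    simpa only [mul_one] using IsBigO.mul hf hg.isBigO_one
  have hqg : (fun r => (a + b * r ^ 2) * (g r - (c + d * r ^ 2))) =O[𝓝[>] 0] fun r => r ^ 4 := by
    simpa only [one_mul] using (hasEvenExpansion_quadratic a b).isBigO_one.mul hg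
  have hquartic : (fun r : ℝ => b * d * r ^ 4) =O[𝓝[>] 0] fun r => r ^ 4 :=
    isBigO_const_mul_self _ _ _
  exact ((hfg.add hqg).add hquartic).congr_left fun r => by ring

theorem const_mul (k : ℝ) (hf : HasEvenExpansion f a b) :
    HasEvenExpansion (fun r => k * f r) (k * a) (k * b) :=
  ((hasEvenExpansion_const k).mul hf).congr (fun _ => rfl) rfl (by ring)

theorem sub (hf : HasEvenExpansion f a b) (hg : HasEvenExpansion g c d) :
    HasEvenExpansion (fun r => f r - g r) (a - c) (b - d) :=
  (hf.add (hg.const_mul (-1))).congr (fun r => by ring) (by ring) (by ring)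

theorem sum {ι : Type*} {s : Finset ι} {F : ι → ℝ → ℝ} {A B : ι → ℝ}
    (hF : ∀ i ∈ s, HasEvenExpansion (F i) (A i) (B i)) :
    HasEvenExpansion (fun r => ∑ i ∈ s, F i r) (∑ i ∈ s, A i) (∑ i ∈ s, B i) :=
  (IsBigO.fun_sum hF).congr_left fun r => by
    simp only [Finset.sum_sub_distrib, Finset.sum_add_distrib, Finset.sum_mul]

theorem odd_mul_odd (hf : HasEvenExpansion (fun r => r * f r) a b)
    (hg : HasEvenExpansion (fun r => g r / r) c d) :
    HasEvenExpansion (fun r => f r * g r) (a * c) (a * d + b * c) := by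
  refine (hf.mul hg).congr' ?_ rfl rfl
  filter_upwards [self_mem_nhdsWithin] with r (hr : 0 < r)
  field_simp

theorem isBigO_div_sq_sub (hf : HasEvenExpansion f 0 b) :
    (fun r => f r / r ^ 2 - b) =O[𝓝[>] 0] fun r => r ^ 2 := by
  have hne : ∀ᶠ r : ℝ in 𝓝[>] 0, r ≠ 0 := eventually_mem_nhdsWithin.mono fun _ hr => ne_of_gt hr
  exact (IsBigO.mul hf (isBigO_refl (fun r : ℝ => (r ^ 2)⁻¹) _)).congr'
    (hne.mono fun r hr => by field_simp; ring) (hne.mono fun r hr => by field_simp)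

end HasEvenExpansion

/-! ### Power series and polynomials in `r²` -/

section PowerSeries

variable {c : ℕ → ℝ}

theorem isBigO_tsum_mul_pow_sub (hc : c =O[atTop] fun _ => (1 : ℝ)) :
    (fun y => ∑' k, c k * y ^ k - (c 0 + c 1 * y)) =O[𝓝 0] fun y => y ^ 2 := by
  let p := FormalMultilinearSeries.ofScalars ℝ c
  have hradius : 0 < p.radius := by
    refine lt_of_lt_of_le ?_ (p.le_radius_of_isBigO (r := 1) ?_)
    · simp
    · simpa [p] using hc
  have hp := (p.hasFPowerSeriesOnBall hradius).hasFPowerSeriesAt.isBigO_sub_partialSum_pow 2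
  refine (isBigO_norm_right.1 (hp.congr_right fun y => (norm_pow y 2).symm)).congr_left fun y => ?_
  simp [p, FormalMultilinearSeries.partialSum, FormalMultilinearSeries.sum, Finset.sum_range_succ,
    mul_comm]

theorem hasEvenExpansion_tsum (hc : c =O[atTop] fun _ => (1 : ℝ)) (x : ℝ) :
    HasEvenExpansion (fun r => ∑' k, c k * (x * r) ^ (2 * k)) (c 0) (c 1 * x ^ 2) := by
  have hlim : Tendsto (fun r : ℝ => (x * r) ^ 2) (𝓝[>] 0) (𝓝 0) :=
    (Continuous.tendsto' (by fun_prop) 0 0 (by simp)).mono_left nhdsWithin_le_nhds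
  have hquartic : (fun r : ℝ => ((x * r) ^ 2) ^ 2) =O[𝓝[>] 0] fun r => r ^ 4 :=
    (isBigO_const_mul_self (x ^ 4) _ _).congr_left fun r => by ring
  refine (((isBigO_tsum_mul_pow_sub hc).comp_tendsto hlim).trans hquartic).congr_left fun r => ?_
  simp only [Function.comp_apply, ← pow_mul]
  ring

theorem hasEvenExpansion_mul_tsum_odd (hc : c =O[atTop] fun _ => (1 : ℝ)) (x : ℝ) :
    HasEvenExpansion (fun r => r * ∑' k, c k * (x * r) ^ (2 * k + 1)) 0 (c 0 * x) := by
  refine ((hasEvenExpansion_tsum hc x).mul (hasEvenExpansion_sq.const_mul x)).congr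
    (fun r => ?_) (by ring) (by ring)
  simp only [pow_succ, ← mul_assoc, tsum_mul_right]
  ring

theorem hasEvenExpansion_sum_range {N : ℕ} (hc : ∀ k, N ≤ k → c k = 0) :
    HasEvenExpansion (fun r => ∑ k ∈ Finset.range N, c k * r ^ (2 * k)) (c 0) (c 1) := by
  have hbdd : c =O[atTop] fun _ => (1 : ℝ) :=
    (isBigO_zero _ _).congr' (eventually_atTop.2 ⟨N, fun k hk => (hc k hk).symm⟩) .rfl
  refine (hasEvenExpansion_tsum hbdd 1).congr (fun r => ?_) rfl (by ring)
  simp only [one_mul]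
  exact tsum_eq_sum fun k hk => by rw [hc k (by simpa using hk), zero_mul]

end PowerSeries

/-! ### Bessel functions -/

theorem psiH_zero : psiH 0 = 0 :=
  Finset.sum_range_zero _

theorem psiH_one : psiH 1 = 1 := by
  simp [psiH]

theorem psiH_nonneg (k : ℕ) : 0 ≤ psiH k :=
  Finset.sum_nonneg fun j _ => by positivity

theorem psiH_le_factorial (k : ℕ) : psiH k ≤ (k.factorial : ℝ) :=
  calc psiH k ≤ ∑ _j ∈ Finset.range k, (1 : ℝ) :=
        Finset.sum_le_sum fun j _ => div_le_one_of_le₀ (by simp) (by positivity)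
    _ = k := by simp
    _ ≤ k.factorial := mod_cast k.self_le_factorial

theorem one_le_factorial_cast (k : ℕ) : (1 : ℝ) ≤ (k.factorial : ℝ) :=
  mod_cast k.factorial_pos

theorem isBigO_one_of_nonneg_of_le {c : ℕ → ℝ} {M : ℝ} (h0 : ∀ k, 0 ≤ c k) (hM : ∀ k, c k ≤ M) :
    c =O[atTop] fun _ => (1 : ℝ) :=
  .of_bound M (.of_forall fun k => by simpa [abs_of_nonneg (h0 k)] using hM k)

theorem hasEvenExpansion_besselI0 (γ : ℝ) :
    HasEvenExpansion (fun r => besselI0 (γ * r)) 1 (γ ^ 2 / 4) := by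
  have hc : (fun k : ℕ => 1 / (k.factorial : ℝ) ^ 2) =O[atTop] fun _ => (1 : ℝ) :=
    isBigO_one_of_nonneg_of_le (M := 1) (fun k => by positivity) fun k =>
      div_le_one_of_le₀ (one_le_pow₀ (one_le_factorial_cast k)) (by positivity)
  refine (hasEvenExpansion_tsum hc (γ / 2)).congr (fun r => tsum_congr fun k => ?_) (by simp) ?_
  · ring
  · simp only [Nat.factorial_one, Nat.cast_one]
    ring

theorem hasEvenExpansion_besselS0 (γ : ℝ) :
    HasEvenExpansion (fun r => besselS0 (γ * r)) 0 (γ ^ 2 / 4) := by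
  have hc : (fun k : ℕ => psiH k / (k.factorial : ℝ) ^ 2) =O[atTop] fun _ => (1 : ℝ) :=
    isBigO_one_of_nonneg_of_le (M := 1) (fun k => div_nonneg (psiH_nonneg k) (by positivity))
      fun k => div_le_one_of_le₀ ((psiH_le_factorial k).trans
        (le_self_pow₀ (one_le_factorial_cast k) two_ne_zero)) (by positivity)
  refine (hasEvenExpansion_tsum hc (γ / 2)).congr (fun r => tsum_congr fun k => ?_)
    (by simp [psiH_zero]) ?_
  · ring
  · simp only [psiH_one, Nat.factorial_one, Nat.cast_one]
    ring

theorem hasEvenExpansion_mul_besselI1 (γ : ℝ) :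
    HasEvenExpansion (fun r => r * besselI1 (γ * r)) 0 (γ / 2) := by
  have hc : (fun k : ℕ => 1 / ((k.factorial : ℝ) * ((k + 1).factorial : ℝ)))
      =O[atTop] fun _ => (1 : ℝ) :=
    isBigO_one_of_nonneg_of_le (M := 1) (fun k => by positivity) fun k => div_le_one_of_le₀
      (one_le_mul_of_one_le_of_one_le (one_le_factorial_cast k) (one_le_factorial_cast (k + 1)))
      (by positivity)
  refine (hasEvenExpansion_mul_tsum_odd hc (γ / 2)).congr
    (fun r => congrArg (r * ·) (tsum_congr fun k => ?_)) rfl (by simp)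
  ring

theorem hasEvenExpansion_mul_besselS1 (γ : ℝ) :
    HasEvenExpansion (fun r => r * besselS1 (γ * r)) 0 (-γ / 4) := by
  have hc : (fun k : ℕ => (psiH (k + 1) + psiH k) / ((k.factorial : ℝ) * ((k + 1).factorial : ℝ)))
      =O[atTop] fun _ => (1 : ℝ) := by
    refine isBigO_one_of_nonneg_of_le (M := 2) (fun k =>
      div_nonneg (add_nonneg (psiH_nonneg _) (psiH_nonneg _)) (by positivity)) fun k => ?_
    have hk := one_le_factorial_cast k
    have hk' := one_le_factorial_cast (k + 1)
    rw [div_le_iff₀ (by positivity)]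
    nlinarith [psiH_le_factorial k, psiH_le_factorial (k + 1)]
  refine ((hasEvenExpansion_mul_tsum_odd hc (γ / 2)).const_mul (-(1 / 2))).congr
    (fun r => ?_) (by simp) ?_
  · rw [besselS1, mul_left_comm]
    congr 3 with k
    ring
  · simp only [zero_add, psiH_zero, psiH_one, Nat.factorial_zero, Nat.factorial_one, Nat.cast_one]
    ring

/-- The constant `C + ln(γ/2)` in the logarithmic terms of `K₀(γr)` and `K₁(γr)`. -/
noncomputable def besselLogConst (γ : ℝ) : ℝ :=
  eulerMascheroniConstant + log (γ / 2)

/-- The modified Bessel function `K₀(γr)` with its singular term `-ln r · I₀(γr)` removed. -/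
noncomputable def besselK0Reg (γ r : ℝ) : ℝ :=
  -besselLogConst γ * besselI0 (γ * r) + besselS0 (γ * r)

/-- The modified Bessel function `K₁(γr)` with its logarithmic term `ln r · I₁(γr)` removed; the
pole `1/(γr)` is kept. -/
noncomputable def besselK1Reg (γ r : ℝ) : ℝ :=
  1 / (γ * r) + besselLogConst γ * besselI1 (γ * r) + besselS1 (γ * r)

theorem hasEvenExpansion_besselK0Reg (γ : ℝ) :
    HasEvenExpansion (besselK0Reg γ) (-besselLogConst γ) ((1 - besselLogConst γ) * γ ^ 2 / 4) :=
  (((hasEvenExpansion_besselI0 γ).const_mul (-besselLogConst γ)).add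
    (hasEvenExpansion_besselS0 γ)).congr (fun _ => rfl) (by ring) (by ring)

theorem hasEvenExpansion_mul_besselK1Reg (γ : ℝ) :
    HasEvenExpansion (fun r => r * besselK1Reg γ r) (1 / γ)
      ((besselLogConst γ / 2 - 1 / 4) * γ) := by
  refine (((hasEvenExpansion_const (1 / γ)).add ((hasEvenExpansion_mul_besselI1 γ).const_mul
    (besselLogConst γ))).add (hasEvenExpansion_mul_besselS1 γ)).congr' ?_ (by ring) (by ring)
  filter_upwards [self_mem_nhdsWithin] with r (hr : 0 < r)
  rw [besselK1Reg]
  field_simp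

theorem hasEvenExpansion_besselKReg_combination (γ : ℝ) {p q : ℝ → ℝ} {p₀ p₂ q₀ q₂ : ℝ}
    (hp : HasEvenExpansion p p₀ p₂) (hq : HasEvenExpansion (fun r => q r / r) q₀ q₂) :
    HasEvenExpansion (fun r => besselK0Reg γ r * p r + besselK1Reg γ r * q r)
      (-besselLogConst γ * p₀ + q₀ / γ)
      (-besselLogConst γ * p₂ + (1 - besselLogConst γ) * γ ^ 2 / 4 * p₀ + q₂ / γ
        + (besselLogConst γ / 2 - 1 / 4) * γ * q₀) :=
  (((hasEvenExpansion_besselK0Reg γ).mul hp).add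
    ((hasEvenExpansion_mul_besselK1Reg γ).odd_mul_odd hq)).congr
      (fun _ => rfl) (by ring) (by ring)

/-! ### The coefficients `a_{n,m}` -/

section Coefficients

variable (γ : ℝ) {m n : ℕ}

theorem acoef_zero_right (n : ℕ) : acoef γ n 0 = 1 := by
  rw [acoef, if_pos rfl]

theorem acoef_eq_zero_of_lt (h : n < m) : acoef γ n m = 0 := by
  rw [acoef, if_neg (by omega), if_pos h]

theorem acoef_succ_self (n : ℕ) :
    acoef γ (n + 1) (n + 1) = -(γ / ((n + 1 : ℕ) : ℝ)) * acoef γ n n := by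
  conv_lhs => rw [acoef, if_neg (by omega), if_neg (by omega), if_pos rfl, Nat.add_sub_cancel]

theorem acoef_succ_of_lt (h : m + 1 < n) :
    acoef γ n (m + 1) = (1 / (2 * γ * ((m + 1 : ℕ) : ℝ))) *
      (4 * (((m + 2) / 2 : ℕ) : ℝ) ^ 2 * acoef γ n (m + 2)
        - γ ^ 2 * ∑ k ∈ Finset.Icc m (n - 1), ((n - k + 1 : ℕ) : ℝ) * acoef γ k m) := by
  rw [acoef, if_neg (by omega), if_neg (by omega), if_neg (by omega), Nat.add_sub_cancel,
    Finset.sum_attach (Finset.Icc m (n - 1)) fun k => ((n - k + 1 : ℕ) : ℝ) * acoef γ k m]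

variable {γ}

theorem acoef_eq_pow_mul (hγ : γ ≠ 0) (n m : ℕ) : acoef γ n m = γ ^ m * acoef 1 n m := by
  induction n, m using acoef.induct with
  | case1 n => simp [acoef_zero_right]
  | case2 n m _ h => simp [acoef_eq_zero_of_lt _ h]
  | case3 n hn _ ih =>
    obtain ⟨n, rfl⟩ := Nat.exists_eq_succ_of_ne_zero hn
    simp only [Nat.succ_eq_add_one, Nat.add_sub_cancel] at ih ⊢
    rw [acoef_succ_self, acoef_succ_self, ih]
    ring
  | case4 n m hm hle hne ih_right ih_left =>
    obtain ⟨m, rfl⟩ := Nat.exists_eq_succ_of_ne_zero hm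
    have hsum : ∑ k ∈ Finset.Icc m (n - 1), ((n - k + 1 : ℕ) : ℝ) * acoef γ k m
        = γ ^ m * ∑ k ∈ Finset.Icc m (n - 1), ((n - k + 1 : ℕ) : ℝ) * acoef 1 k m := by
      rw [Finset.mul_sum]
      refine Finset.sum_congr rfl fun k hk => ?_
      rw [show acoef γ k m = γ ^ m * acoef 1 k m from ih_left ⟨k, hk⟩]
      ring
    rw [Nat.succ_eq_add_one, acoef_succ_of_lt γ (by omega), acoef_succ_of_lt 1 (by omega), hsum,
      show acoef γ n (m + 2) = γ ^ (m + 2) * acoef 1 n (m + 2) from ih_right]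
    field_simp
    ring

theorem sum_range_sub_add_one (n : ℕ) :
    ∑ k ∈ Finset.range n, ((n - k + 1 : ℕ) : ℝ) = ((n : ℝ) + 1) * (n + 2) / 2 - 1 := by
  induction n with
  | zero => norm_num
  | succ n ih =>
    rw [Finset.sum_range_succ']
    simp only [Nat.add_sub_add_right, ih]
    push_cast
    ring

theorem acoef_two (hγ : γ ≠ 0) (n : ℕ) :
    acoef γ n 2 = γ / 2 * acoef γ n 1 + γ ^ 2 / 4 * (((n : ℝ) + 1) * (n + 2) / 2 - 1) := by
  rcases n with _ | _ | n
  · norm_num [acoef_eq_zero_of_lt]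
  · rw [acoef_eq_zero_of_lt γ (by norm_num), acoef_succ_self, acoef_zero_right]
    push_cast
    ring
  · have hrec := acoef_succ_of_lt γ (m := 0) (n := n + 2) (by omega)
    simp only [← Nat.range_succ_eq_Icc_zero, acoef_zero_right, zero_add, Nat.div_self two_pos,
      Nat.sub_add_cancel (show 1 ≤ n + 2 by omega), Nat.cast_one, one_pow, mul_one] at hrec
    rw [← sum_range_sub_add_one, hrec]
    field_simp
    ring

end Coefficients

/-! ### The polynomials and the fundamental solutions -/

section Polynomials

variable (γ : ℝ) (n : ℕ)

theorem hasEvenExpansion_vPol : HasEvenExpansion (vPol γ n) 1 (acoef γ n 2) :=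
  (hasEvenExpansion_sum_range (c := fun m => acoef γ n (2 * m)) (N := n / 2 + 1)
    fun k hk => acoef_eq_zero_of_lt γ (by omega)).congr
      (fun _ => rfl) (acoef_zero_right γ n) rfl

theorem hasEvenExpansion_acoef_odd :
    HasEvenExpansion
      (fun r => ∑ m ∈ Finset.range ((n - 1) / 2 + 1), acoef γ n (2 * m + 1) * r ^ (2 * m))
      (acoef γ n 1) (acoef γ n 3) :=
  hasEvenExpansion_sum_range fun k hk => acoef_eq_zero_of_lt γ (by omega)

theorem hasEvenExpansion_wPol_div :
    HasEvenExpansion (fun r => wPol γ n r / r) (acoef γ n 1) (acoef γ n 3) := by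
  refine (hasEvenExpansion_acoef_odd γ n).congr' ?_ rfl rfl
  filter_upwards [self_mem_nhdsWithin] with r (hr : 0 < r)
  rw [wPol, eq_div_iff hr.ne', Finset.sum_mul]
  exact Finset.sum_congr rfl fun m _ => by ring

theorem sum_Icc_one_eq_sum_range {M : Type*} [AddCommMonoid M] {f : ℕ → M} (N : ℕ)
    (h : f 0 = 0) :
    ∑ m ∈ Finset.Icc 1 N, f m = ∑ m ∈ Finset.range (N + 1), f m := by
  rw [Finset.range_eq_Ico, Finset.sum_eq_sum_Ico_succ_bot N.succ_pos, h, zero_add]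
  rfl

theorem vTil_eq (r : ℝ) :
    vTil γ n r =
      2 * ∑ m ∈ Finset.range (n / 2 + 1), (m * acoef γ n (2 * m)) * r ^ (2 * m)
        - γ * (r * wPol γ n r) := by
  rw [vTil, wPol, sum_Icc_one_eq_sum_range _ (by simp), Finset.mul_sum (a := r)]
  congr 3 with m
  ring

theorem wTil_eq (r : ℝ) :
    wTil γ n r =
      r * (2 * ∑ m ∈ Finset.range ((n - 1) / 2 + 1), (m * acoef γ n (2 * m + 1)) * r ^ (2 * m)
        - γ * vPol γ n r) := by
  rw [wTil, vPol, sum_Icc_one_eq_sum_range _ (by simp)]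
  simp only [pow_succ, mul_sub, Finset.mul_sum]
  congr 2 <;> ext m <;> ring

theorem hasEvenExpansion_vTil :
    HasEvenExpansion (vTil γ n) 0 (2 * acoef γ n 2 - γ * acoef γ n 1) := by
  have heven : HasEvenExpansion
      (fun r => ∑ m ∈ Finset.range (n / 2 + 1), (m * acoef γ n (2 * m)) * r ^ (2 * m))
      0 (acoef γ n 2) :=
    (hasEvenExpansion_sum_range (c := fun m => m * acoef γ n (2 * m)) fun k hk => by
      rw [acoef_eq_zero_of_lt γ (by omega), mul_zero]).congr (fun _ => rfl) (by simp) (by simp)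
  have hodd : HasEvenExpansion (fun r => r * wPol γ n r) 0 (acoef γ n 1) :=
    (hasEvenExpansion_sq.mul (hasEvenExpansion_wPol_div γ n)).congr'
      (by filter_upwards [self_mem_nhdsWithin] with r (hr : 0 < r); field_simp)
      (by ring) (by ring)
  exact ((heven.const_mul 2).sub (hodd.const_mul γ)).congr (fun r => (vTil_eq γ n r).symm)
    (by ring) rfl

theorem hasEvenExpansion_wTil_div :
    HasEvenExpansion (fun r => wTil γ n r / r) (-γ) (2 * acoef γ n 3 - γ * acoef γ n 2) := by
  have hodd : HasEvenExpansion (fun r => ∑ m ∈ Finset.range ((n - 1) / 2 + 1),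
      (m * acoef γ n (2 * m + 1)) * r ^ (2 * m)) 0 (acoef γ n 3) :=
    (hasEvenExpansion_sum_range (c := fun m => m * acoef γ n (2 * m + 1)) fun k hk => by
      rw [acoef_eq_zero_of_lt γ (by omega), mul_zero]).congr (fun _ => rfl) (by simp) (by simp)
  refine ((hodd.const_mul 2).sub ((hasEvenExpansion_vPol γ n).const_mul γ)).congr' ?_
    (by ring) rfl
  filter_upwards [self_mem_nhdsWithin] with r (hr : 0 < r)
  rw [wTil_eq, mul_div_cancel_left₀ _ hr.ne']

end Polynomials

section FundamentalSolutions

variable {γ : ℝ} (n : ℕ)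

theorem isBigO_phiHatTil_add_one (hγ : γ ≠ 0) :
    (fun r => phiHatTil γ n r + 1) =O[𝓝[>] 0] fun r => r ^ 2 := by
  have h := hasEvenExpansion_besselKReg_combination γ (hasEvenExpansion_vTil γ n)
    (hasEvenExpansion_wTil_div γ n)
  have hlead : -besselLogConst γ * 0 + -γ / γ = -1 := by field_simp; ring
  exact h.isBigO_sub.congr_left fun r => by rw [hlead, sub_neg_eq_add]; rfl

theorem hasEvenExpansion_phiHatTil_sub_two_mul_phiHat (hγ : γ ≠ 0) :
    HasEvenExpansion (fun r => phiHatTil γ n r - 2 * phiHat γ n r)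
      (2 * besselLogConst γ - 1 - 2 * acoef 1 n 1)
      (-(γ ^ 2 / 8) * (((n : ℝ) + 1) * (n + 2))) := by
  have hTil := hasEvenExpansion_besselKReg_combination γ (hasEvenExpansion_vTil γ n)
    (hasEvenExpansion_wTil_div γ n)
  have hHat := hasEvenExpansion_besselKReg_combination γ (hasEvenExpansion_vPol γ n)
    (hasEvenExpansion_wPol_div γ n)
  refine (hTil.sub (hHat.const_mul 2)).congr (fun _ => rfl) ?_ ?_
  · rw [acoef_eq_pow_mul hγ n 1]
    field_simp
    ring
  · rw [acoef_two hγ n]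
    field_simp
    ring

end FundamentalSolutions

/-! ### The sum with weights `χ_{k,n}` -/

section SumChi

variable (n : ℕ)

variable {n} in
theorem chiC_eq_zero_of_add_neg {k : ℤ} (hk : -2 ≤ k) (h : (n : ℤ) + k < 0) : chiC n k = 0 := by
  obtain ⟨rfl, rfl⟩ | ⟨rfl, rfl⟩ | ⟨rfl, rfl⟩ :
      (n = 0 ∧ k = -2) ∨ (n = 0 ∧ k = -1) ∨ (n = 1 ∧ k = -2) := by omega
  all_goals simp [chiC]

/- For `n < 2` the truncated indices `n - 2` and `n - 1` are harmless: the weights of the terms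
omitted from `sumChi` vanish. -/
theorem sumChi_eq (f : ℕ → ℝ) :
    sumChi n f = n * (n - 1) * f (n - 2) + -4 * n ^ 2 * f (n - 1)
      + 2 * (3 * n ^ 2 + 3 * n + 1) * f n + -4 * (n + 1) ^ 2 * f (n + 1)
      + (n + 1) * (n + 2) * f (n + 2) := by
  have hterm : ∀ k ∈ Finset.Icc (-2 : ℤ) 2,
      (if 0 ≤ (n : ℤ) + k then chiC n k * f ((n : ℤ) + k).toNat else 0)
        = chiC n k * f ((n : ℤ) + k).toNat := by
    intro k hk
    split_ifs with h
    · rfl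
    · rw [chiC_eq_zero_of_add_neg (Finset.mem_Icc.1 hk).1 (not_le.1 h), zero_mul]
  have hI : Finset.Icc (-2 : ℤ) 2 = {-2, -1, 0, 1, 2} := by decide
  rw [sumChi, Finset.sum_congr rfl hterm, hI, Finset.sum_insert (by decide),
    Finset.sum_insert (by decide), Finset.sum_insert (by decide), Finset.sum_insert (by decide),
    Finset.sum_singleton, show ((n : ℤ) + -2).toNat = n - 2 by omega,
    show ((n : ℤ) + -1).toNat = n - 1 by omega, show ((n : ℤ) + 0).toNat = n by omega,
    show ((n : ℤ) + 1).toNat = n + 1 by omega, show ((n : ℤ) + 2).toNat = n + 2 by omega]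
  norm_num [chiC, add_assoc]

theorem sumChi_const (a : ℝ) : sumChi n (fun _ => a) = 0 := by
  rw [sumChi_eq]
  ring

theorem sumChi_mul_add_one_mul_add_two (b : ℝ) :
    sumChi n (fun j => b * (((j : ℝ) + 1) * (j + 2))) = 4 * b := by
  rw [sumChi_eq]
  rcases n with _ | _ | n
  · push_cast
    ring
  · push_cast
    ring
  · rw [show n + 1 + 1 - 2 = n by omega, show n + 1 + 1 - 1 = n + 1 by omega]
    push_cast
    ring

theorem HasEvenExpansion.sumChi {F : ℕ → ℝ → ℝ} {A B : ℕ → ℝ}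
    (hF : ∀ j, HasEvenExpansion (F j) (A j) (B j)) :
    HasEvenExpansion (fun r => sumChi n fun j => F j r) (sumChi n A) (sumChi n B) := by
  refine HasEvenExpansion.sum fun k _ => ?_
  split_ifs
  · exact (hF _).const_mul _
  · exact hasEvenExpansion_const 0

theorem hasEvenExpansion_sumChi_phiHatTil {γs γp : ℝ} (hs : γs ≠ 0) (hp : γp ≠ 0) :
    HasEvenExpansion
      (fun r => sumChi n fun j => phiHatTil γs j r - 2 * phiHat γs j r
        + 2 * phiHat γp j r - phiHatTil γp j r)
      0 ((γp ^ 2 - γs ^ 2) / 2) := by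
  have hterm (j : ℕ) : HasEvenExpansion
      (fun r => phiHatTil γs j r - 2 * phiHat γs j r + 2 * phiHat γp j r - phiHatTil γp j r)
      (2 * besselLogConst γs - 2 * besselLogConst γp)
      ((γp ^ 2 - γs ^ 2) / 8 * (((j : ℝ) + 1) * (j + 2))) :=
    ((hasEvenExpansion_phiHatTil_sub_two_mul_phiHat j hs).sub
      (hasEvenExpansion_phiHatTil_sub_two_mul_phiHat j hp)).congr
        (fun r => by ring) (by ring) (by ring)
  refine (HasEvenExpansion.sumChi n hterm).congr (fun _ => rfl) (sumChi_const n _) ?_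
  rw [sumChi_mul_add_one_mul_add_two]
  ring

end SumChi

theorem xiTil_one_eq (κ cs cp : ℝ) (n : ℕ) (r : ℝ) :
    xiTil κ cs cp 1 n r =
      1 / κ ^ 2 * (sumChi n (fun j => phiHatTil (κ / cs) j r - 2 * phiHat (κ / cs) j r
        + 2 * phiHat (κ / cp) j r - phiHatTil (κ / cp) j r) / r ^ 2)
      + 1 / cp ^ 2 * phiHatTil (κ / cp) n r := by
  rw [xiTil]
  simp only [Nat.sub_self, pow_zero, Nat.cast_one, sub_self, zero_div, zero_mul, add_zero]
  ring

theorem isBigO_xiTil_one_sub {κ cs cp : ℝ} (hκ : κ ≠ 0) (hcs : cs ≠ 0) (hcp : cp ≠ 0) (n : ℕ) :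
    (fun r => xiTil κ cs cp 1 n r - (-(1 / (2 * cp ^ 2)) - 1 / (2 * cs ^ 2)))
      =O[𝓝[>] 0] fun r => r ^ 2 := by
  have hs : κ / cs ≠ 0 := div_ne_zero hκ hcs
  have hp : κ / cp ≠ 0 := div_ne_zero hκ hcp
  have hsum := (hasEvenExpansion_sumChi_phiHatTil n hs hp).isBigO_div_sq_sub
  refine ((hsum.const_mul_left (1 / κ ^ 2)).add
    ((isBigO_phiHatTil_add_one n hp).const_mul_left (1 / cp ^ 2))).congr_left fun r => ?_
  rw [xiTil_one_eq]
  field_simp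
  ring

/-- ξ̃_{1,n}(r) = −1/(2c_p²) − 1/(2c_s²) + O(r²) as r → 0⁺. -/
theorem xiTil_one_asymptotics (κ cs cp : ℝ) (hκ : 0 < κ) (hcs : 0 < cs) (hcp : 0 < cp) (n : ℕ) :
    (∃ ε > (0 : ℝ), ∃ M > (0 : ℝ), ∀ r : ℝ, 0 < r → r < ε →
      |xiTil κ cs cp 1 n r - (-(1 / (2 * cp ^ 2)) - 1 / (2 * cs ^ 2))| ≤ M * r ^ 2) ∧
    Tendsto (fun r => xiTil κ cs cp 1 n r) (nhdsWithin 0 (Set.Ioi 0))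
      (nhds (-(1 / (2 * cp ^ 2)) - 1 / (2 * cs ^ 2))) := by
  have hO := isBigO_xiTil_one_sub hκ.ne' hcs.ne' hcp.ne' n
  refine ⟨?_, tendsto_of_isBigO_sub_sq hO⟩
  simpa only [abs_sq] using exists_forall_abs_le_of_isBigO_nhdsGT_zero hO
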